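/- (Petrov–Galerkin error representation for H2.) Let σ1, σ2 : ℂ with G(σ1), G(σ2), G(σ1+σ2) invertible, and let V₂, W₂ : Matrix (Fin n) (Fin r) ℂ. Let z₂ : Fin r → ℂ satisfy W₂ᵀ *ᵥ r₂pr = 0, where r₂pr = B₂(σ1, σ2) - G(σ1+σ2) *ᵥ (V₂ *ᵥ z₂). Let z₂du : Fin r → ℂ be arbitrary and set r₂du = -C - G(σ1+σ2)ᵀ *ᵥ (W₂ *ᵥ z₂du). Then H2(σ1, σ2) - C ⬝ᵥ (V₂ *ᵥ z₂) = -(((G(σ1+σ2)ᵀ)⁻¹ *ᵥ r₂du) ⬝ᵥ r₂pr). -/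

import Mathlib

open Matrix
open scoped Kronecker

noncomputable section

/-- Kronecker product of vectors: `(u ⊗ v) (l, j) = u l * v j`. -/
def vkron {n : ℕ} (u v : Fin n → ℂ) : Fin n × Fin n → ℂ :=
  fun p => u p.1 * v p.2

/-- The matrix pencil `G(s) = s • E - A`. -/
def Gm {n : ℕ} (E A : Matrix (Fin n) (Fin n) ℂ) (s : ℂ) : Matrix (Fin n) (Fin n) ℂ :=
  s • E - A

/-- Primal state of the first subsystem: `x1(s) = G(s)⁻¹ *ᵥ B`. -/
def x1 {n : ℕ} (E A : Matrix (Fin n) (Fin n) ℂ) (B : Fin n → ℂ) (s : ℂ) : Fin n → ℂ :=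
  (Gm E A s)⁻¹ *ᵥ B

/-- First-order transfer function `H1(s) = C ⬝ᵥ x1(s)`. -/
def H1 {n : ℕ} (E A : Matrix (Fin n) (Fin n) ℂ) (B C : Fin n → ℂ) (s : ℂ) : ℂ :=
  C ⬝ᵥ x1 E A B s

/-- Second-order input term `B₂(s1, s2)`. -/
def B2 {n : ℕ} (E A N : Matrix (Fin n) (Fin n) ℂ) (Q : Matrix (Fin n) (Fin n × Fin n) ℂ)
    (B : Fin n → ℂ) (s1 s2 : ℂ) : Fin n → ℂ :=
  Q *ᵥ vkron (x1 E A B s1) (x1 E A B s2) + (1/2 : ℂ) • (N *ᵥ (x1 E A B s1 + x1 E A B s2))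

/-- Primal state of the second subsystem: `x2(s1, s2) = G(s1+s2)⁻¹ *ᵥ B₂(s1, s2)`. -/
def x2 {n : ℕ} (E A N : Matrix (Fin n) (Fin n) ℂ) (Q : Matrix (Fin n) (Fin n × Fin n) ℂ)
    (B : Fin n → ℂ) (s1 s2 : ℂ) : Fin n → ℂ :=
  (Gm E A (s1 + s2))⁻¹ *ᵥ B2 E A N Q B s1 s2

/-- Second-order (symmetric) transfer function `H2(s1, s2) = C ⬝ᵥ x2(s1, s2)`. -/
def H2 {n : ℕ} (E A N : Matrix (Fin n) (Fin n) ℂ) (Q : Matrix (Fin n) (Fin n × Fin n) ℂ)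
    (B C : Fin n → ℂ) (s1 s2 : ℂ) : ℂ :=
  C ⬝ᵥ x2 E A N Q B s1 s2

/-- Dual state of the first subsystem: `y1(s) = (G(s)ᵀ)⁻¹ *ᵥ C`. -/
def y1 {n : ℕ} (E A : Matrix (Fin n) (Fin n) ℂ) (C : Fin n → ℂ) (s : ℂ) : Fin n → ℂ :=
  ((Gm E A s)ᵀ)⁻¹ *ᵥ C

/-- Mode-2 matricization: `Q⁽²⁾ j (l, i) = Q i (l, j)`. -/
def mode2 {n : ℕ} (Q : Matrix (Fin n) (Fin n × Fin n) ℂ) : Matrix (Fin n) (Fin n × Fin n) ℂ :=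
  fun j p => Q p.2 (p.1, j)

/-- Dual output term `C₂(s1, s2)`. -/
def C2 {n : ℕ} (E A N : Matrix (Fin n) (Fin n) ℂ) (Q : Matrix (Fin n) (Fin n × Fin n) ℂ)
    (B C : Fin n → ℂ) (s1 s2 : ℂ) : Fin n → ℂ :=
  mode2 Q *ᵥ vkron (x1 E A B s2) (y1 E A C (s1 + s2)) +
    (1/2 : ℂ) • (Nᵀ *ᵥ y1 E A C (s1 + s2))

/-- Dual state of the second subsystem: `y2(s1, s2) = (G(s1)ᵀ)⁻¹ *ᵥ C₂(s1, s2)`. -/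
def y2 {n : ℕ} (E A N : Matrix (Fin n) (Fin n) ℂ) (Q : Matrix (Fin n) (Fin n × Fin n) ℂ)
    (B C : Fin n → ℂ) (s1 s2 : ℂ) : Fin n → ℂ :=
  ((Gm E A s1)ᵀ)⁻¹ *ᵥ C2 E A N Q B C s1 s2

/-- `Q` is symmetric: `Q *ᵥ (u ⊗ v) = Q *ᵥ (v ⊗ u)` for all `u, v`. -/
def QSymm {n : ℕ} (Q : Matrix (Fin n) (Fin n × Fin n) ℂ) : Prop :=
  ∀ u v : Fin n → ℂ, Q *ᵥ vkron u v = Q *ᵥ vkron v u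

/-- Euclidean (ℓ²) norm of a vector in `Fin n → ℂ`. -/
def vnorm {n : ℕ} (v : Fin n → ℂ) : ℝ := ‖(WithLp.equiv 2 (Fin n → ℂ)).symm v‖

/-- ℓ²-induced operator norm of a square complex matrix. -/
def mnorm {n : ℕ} (M : Matrix (Fin n) (Fin n) ℂ) : ℝ := ‖Matrix.toEuclideanCLM (𝕜 := ℂ) M‖

/-!
The exact dual solution `Gᵀ⁻¹ c` turns the primal residual `b - G x` into the output error
`c ⬝ (G⁻¹ b - x)`. The dual residual `r = -c - Gᵀ W y` satisfies `-Gᵀ⁻¹ r = Gᵀ⁻¹ c + W y`, and the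
extra term `W y` is orthogonal to the primal residual by the Petrov–Galerkin condition.
-/

section LinearSystem

variable {R ι κ : Type*} [CommRing R] [Fintype ι]

lemma mulVec_dotProduct_eq_zero_of_transpose_mulVec [Fintype κ] {W : Matrix ι κ R} {v : ι → R}
    (hv : Wᵀ *ᵥ v = 0) (y : κ → R) : (W *ᵥ y) ⬝ᵥ v = 0 := by
  rw [dotProduct_comm, ← dotProduct_transpose_mulVec, hv, dotProduct_zero]

variable [DecidableEq ι]

lemma inv_mulVec_sub_mulVec {G : Matrix ι ι R} (hG : IsUnit G) (b x : ι → R) :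
    G⁻¹ *ᵥ (b - G *ᵥ x) = G⁻¹ *ᵥ b - x := by
  rw [mulVec_sub, mulVec_mulVec, nonsing_inv_mul G ((isUnit_iff_isUnit_det G).mp hG), one_mulVec]

lemma transpose_inv_mulVec_dotProduct (G : Matrix ι ι R) (c v : ι → R) :
    (Gᵀ⁻¹ *ᵥ c) ⬝ᵥ v = c ⬝ᵥ (G⁻¹ *ᵥ v) := by
  rw [← transpose_nonsing_inv, mulVec_transpose, dotProduct_mulVec]

lemma output_error_eq_dual_dotProduct_residual {G : Matrix ι ι R} (hG : IsUnit G)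
    (b c x : ι → R) :
    c ⬝ᵥ (G⁻¹ *ᵥ b) - c ⬝ᵥ x = (Gᵀ⁻¹ *ᵥ c) ⬝ᵥ (b - G *ᵥ x) := by
  rw [transpose_inv_mulVec_dotProduct, inv_mulVec_sub_mulVec hG, dotProduct_sub]

theorem petrov_galerkin_error_representation_H2_general [Fintype κ] {G : Matrix ι ι R}
    (hG : IsUnit G) {W : Matrix ι κ R} {b x : ι → R} (hPG : Wᵀ *ᵥ (b - G *ᵥ x) = 0)
    (c : ι → R) (y : κ → R) :
    c ⬝ᵥ (G⁻¹ *ᵥ b) - c ⬝ᵥ x =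
      -((Gᵀ⁻¹ *ᵥ (-c - Gᵀ *ᵥ (W *ᵥ y))) ⬝ᵥ (b - G *ᵥ x)) := by
  have dual_error_eq : Gᵀ⁻¹ *ᵥ (-c - Gᵀ *ᵥ (W *ᵥ y)) = -(Gᵀ⁻¹ *ᵥ c) - W *ᵥ y := by
    rw [inv_mulVec_sub_mulVec ((isUnit_transpose G).mpr hG), mulVec_neg]
  rw [dual_error_eq, sub_dotProduct, mulVec_dotProduct_eq_zero_of_transpose_mulVec hPG, sub_zero,
    neg_dotProduct, neg_neg]
  exact output_error_eq_dual_dotProduct_residual hG b c x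

end LinearSystem

theorem petrov_galerkin_error_representation_H2 {n r : ℕ}
    (E A N : Matrix (Fin n) (Fin n) ℂ) (Q : Matrix (Fin n) (Fin n × Fin n) ℂ)
    (B C : Fin n → ℂ) (σ1 σ2 : ℂ)
    (hG1 : IsUnit (Gm E A σ1)) (hG2 : IsUnit (Gm E A σ2))
    (hG12 : IsUnit (Gm E A (σ1 + σ2)))
    (V₂ W₂ : Matrix (Fin n) (Fin r) ℂ) (z₂ z₂du : Fin r → ℂ)
    (hPG : W₂ᵀ *ᵥ (B2 E A N Q B σ1 σ2 - Gm E A (σ1 + σ2) *ᵥ (V₂ *ᵥ z₂)) = 0) :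
    H2 E A N Q B C σ1 σ2 - C ⬝ᵥ (V₂ *ᵥ z₂) =
      -((((Gm E A (σ1 + σ2))ᵀ)⁻¹ *ᵥ (-C - (Gm E A (σ1 + σ2))ᵀ *ᵥ (W₂ *ᵥ z₂du))) ⬝ᵥ
        (B2 E A N Q B σ1 σ2 - Gm E A (σ1 + σ2) *ᵥ (V₂ *ᵥ z₂))) :=
  petrov_galerkin_error_representation_H2_general hG12 hPG C z₂du
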